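/- Fix integers 0 ≤ r ≤ n. Let Ψ : Sₙ → End_𝕜(K) be any monoid homomorphism (with End_𝕜(K) under composition) such that Ψ sends the transposition (i, i+1) to Dᵢ⁻ for every 1 ≤ i ≤ n−1. For μ ∈ P_{r,n}, 1 ≤ i ≤ r and 1 ≤ j ≤ n−r, set ε_{i,j}(μ) = 1 if j ≤ μᵢ and ε_{i,j}(μ) = −1 otherwise, and set y_{i,j} = (x_{r+1−i} − x_{r+j})^{−1} ∈ K. Then ∑_{π ∈ S_r×S_{n−r}} Ψ(π)( ∑_{μ ∈ P_{r,n}} ∏_{i=1}^{r} ∏_{j=1}^{n−r} (1 − ε_{i,j}(μ)·y_{i,j}) ) = n! (as an element of K), where S_r×S_{n−r} denotes the Young subgroup of Sₙ consisting of all permutations that preserve both {1,…,r} and {r+1,…,n}. -/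

import Mathlib

noncomputable section

open MvPolynomial

/-- The `i`-th variable `xᵢ`, regarded as an element of the field `K` of rational
functions (the fraction field of `MvPolynomial (Fin n) 𝕜`). -/
def ratVar (𝕜 : Type*) [Field 𝕜] (n : ℕ) (K : Type*) [Field K]
    [Algebra (MvPolynomial (Fin n) 𝕜) K] (i : Fin n) : K :=
  algebraMap (MvPolynomial (Fin n) 𝕜) K (X i)

/-- The `𝕜`-linear operator `f ↦ s f - (f - s f) * c⁻¹` (that is, `s − ∂` where
`∂ f = (f - s f)/c`). -/
def demazureMinusAux (𝕜 : Type*) [Field 𝕜] (K : Type*) [Field K] [Algebra 𝕜 K]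
    (s : K ≃ₐ[𝕜] K) (c : K) : Module.End 𝕜 K :=
  s.toLinearMap - (LinearMap.mulRight 𝕜 c⁻¹) ∘ₗ ((LinearMap.id : K →ₗ[𝕜] K) - s.toLinearMap)

/-- The operator `Dᵢ⁻ = sᵢ − ∂ᵢ` (0-indexed variables). -/
def DMinus (𝕜 : Type*) [Field 𝕜] {n : ℕ} (K : Type*) [Field K] [Algebra 𝕜 K]
    [Algebra (MvPolynomial (Fin n) 𝕜) K]
    (s : Equiv.Perm (Fin n) → (K ≃ₐ[𝕜] K)) (i : ℕ) (hi : i + 1 < n) : Module.End 𝕜 K :=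
  demazureMinusAux 𝕜 K (s (Equiv.swap ⟨i, Nat.lt_of_succ_lt hi⟩ ⟨i + 1, hi⟩))
    (ratVar 𝕜 n K ⟨i + 1, hi⟩ - ratVar 𝕜 n K ⟨i, Nat.lt_of_succ_lt hi⟩)

/-!
If `S_k` permutes `y₁, …, y_k`, the symmetrizer of the operators `Dᵢ⁻` is
`∑ Ψ(σ) f = ∑ σ(f · ∏_{i < j} (1 + (yᵢ - yⱼ)⁻¹))`, by induction along `S_k ⊂ S_{k+1}`: on a function
`g` fixed by `S_k`, the minimal coset representatives `c_p` satisfy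
`∑ Ψ(c_p) g = ∑ ∏ⱼ (1 + (y_p - yⱼ)⁻¹) · c_p g`.

The Young symmetrizer thus turns the sum over partitions into a function of two families of
variables `a` and `b`. Emptying the bottom row or filling the first column of the box
expresses it through the same function with one variable `t` of `a` or of `b` removed, with
coefficient `∏_{z ≠ t} (1 + (t - z)⁻¹)`, where `z` runs over the other variables of both families.
By Lagrange interpolation these coefficients add up to the number of variables, which gives
`n · (n - 1)! = n!`.
-/

section SymmetrizedBoxSum

open Finset Equiv

section RationalFunctions

variable {K ι : Type*} [Field K]

/-- The rational function `∏ⱼ (t - yⱼ + 1) / (t - yⱼ)` of `t`. A factor with `yⱼ = t` equals `1`,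
because `0⁻¹ = 0`; so the index of `t` itself may be left in the product. -/
def crossProd [Fintype ι] (t : K) (y : ι → K) : K :=
  ∏ j, (1 + (t - y j)⁻¹)

/-- The product `∏_{i < j} (1 + (yᵢ - yⱼ)⁻¹)`, the weight by which the symmetrizer of the operators
`Dᵢ⁻` differs from the symmetrizer of the permutations of the variables. -/
def pairProd {k : ℕ} (y : Fin k → K) : K :=
  ∏ i, ∏ j ∈ Ioi i, (1 + (y i - y j)⁻¹)

lemma crossProd_comp_equiv {κ : Type*} [Fintype ι] [Fintype κ] (t : K) (y : ι → K) (e : κ ≃ ι) :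
    crossProd t (y ∘ e) = crossProd t y :=
  e.prod_comp fun j => 1 + (t - y j)⁻¹

lemma crossProd_sumElim {κ : Type*} [Fintype ι] [Fintype κ] (t : K) (a : ι → K) (b : κ → K) :
    crossProd t (Sum.elim a b) = crossProd t a * crossProd t b :=
  Fintype.prod_sum_type _

lemma crossProd_comp_succAbove {k : ℕ} (y : Fin (k + 1) → K) (p : Fin (k + 1)) :
    crossProd (y p) (y ∘ p.succAbove) = crossProd (y p) y := by
  simp [crossProd, Fin.prod_univ_succAbove _ p]

lemma pairProd_succ {k : ℕ} (y : Fin (k + 1) → K) :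
    pairProd y = crossProd (y 0) (y ∘ Fin.succ) * pairProd (y ∘ Fin.succ) := by
  simp only [pairProd, crossProd, Fin.prod_univ_succ, Fin.prod_Ioi_zero, Fin.prod_Ioi_succ,
    Function.comp_apply]

lemma map_crossProd {L F : Type*} [Field L] [Fintype ι] [FunLike F K L]
    [RingHomClass F K L] (φ : F) (t : K) (y : ι → K) :
    φ (crossProd t y) = crossProd (φ t) (φ ∘ y) := by
  simp [crossProd]

lemma map_pairProd {L F : Type*} [Field L] [FunLike F K L]
    [RingHomClass F K L] (φ : F) {k : ℕ} (y : Fin k → K) :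
    φ (pairProd y) = pairProd (φ ∘ y) := by
  simp [pairProd]

/-- Compare the two expressions for the coefficient of `X ^ (card ι - 1)` in
`∏ⱼ (X - zⱼ) - ∏ⱼ (X - zⱼ + 1)`: by Vieta and by Lagrange interpolation at the nodes `zⱼ`. -/
theorem sum_crossProd [Fintype ι] (z : ι → K) (hz : Function.Injective z) :
    ∑ k, crossProd (z k) z = (Fintype.card ι : K) := by
  classical
  rcases isEmpty_or_nonempty ι with _ | _
  · simp
  let p := Lagrange.nodal univ fun j => z j - 1
  let q := Lagrange.nodal univ z
  have hlt : (p - q).degree < #(univ : Finset ι) := by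
    rw [← Lagrange.degree_nodal (v := fun j => z j - 1)]
    exact Polynomial.degree_sub_lt_left (by simp only [p, q, Lagrange.degree_nodal])
      Lagrange.nodal_ne_zero (by simp only [p, q, Lagrange.nodal_monic.leadingCoeff])
  have hpos : 0 < #(univ : Finset ι) := card_pos.2 univ_nonempty
  have hvieta : (p - q).coeff (#(univ : Finset ι) - 1) = Fintype.card ι := by
    simp only [p, q, Lagrange.nodal, Polynomial.coeff_sub,
      Polynomial.prod_X_sub_C_coeff_card_pred _ _ hpos]
    simp
  rw [← hvieta, Lagrange.coeff_eq_sum hz.injOn hlt]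
  refine sum_congr rfl fun k _ => ?_
  have hpk : p.eval (z k) = ∏ j ∈ univ.erase k, (z k - z j + 1) := by
    simp [p, Lagrange.eval_nodal, ← mul_prod_erase univ _ (mem_univ k), sub_sub_eq_add_sub,
      add_sub_right_comm]
  have hqk : q.eval (z k) = 0 := Lagrange.eval_nodal_at_node (mem_univ k)
  rw [Polynomial.eval_sub, hpk, hqk, sub_zero, ← prod_div_distrib, crossProd,
    ← mul_prod_erase univ _ (mem_univ k), sub_self, inv_zero, add_zero, one_mul]
  refine prod_congr rfl fun j hj => ?_
  have hne : z k - z j ≠ 0 := sub_ne_zero.2 (hz.ne (ne_of_mem_erase hj).symm)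
  field_simp

end RationalFunctions

section CosetDecomposition

variable {k : ℕ}

/-- The embedding of `S_k` into `S_{k+1}` as the stabilizer of `0`. -/
def liftSucc (k : ℕ) : Perm (Fin k) →* Perm (Fin (k + 1)) :=
  Perm.viaEmbeddingHom (Fin.succEmb k)

lemma liftSucc_apply_zero (e : Perm (Fin k)) : liftSucc k e 0 = 0 :=
  Perm.viaEmbedding_apply_of_notMem e _ 0 (by simp)

lemma liftSucc_apply_succ (e : Perm (Fin k)) (i : Fin k) : liftSucc k e i.succ = (e i).succ :=
  Perm.viaEmbedding_apply e (Fin.succEmb k) i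

lemma cycleRange_symm_mul_liftSucc_zero (p : Fin (k + 1)) (e : Perm (Fin k)) :
    (p.cycleRange.symm * liftSucc k e) 0 = p := by
  rw [Perm.mul_apply, liftSucc_apply_zero, Fin.cycleRange_symm_zero]

lemma cycleRange_symm_mul_liftSucc_succ (p : Fin (k + 1)) (e : Perm (Fin k)) (i : Fin k) :
    (p.cycleRange.symm * liftSucc k e) i.succ = p.succAbove (e i) := by
  rw [Perm.mul_apply, liftSucc_apply_succ, Fin.cycleRange_symm_succ]

lemma bijective_cycleRange_symm_mul_liftSucc (k : ℕ) :
    Function.Bijective fun x : Fin (k + 1) × Perm (Fin k) =>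
      x.1.cycleRange.symm * liftSucc k x.2 := by
  refine (Fintype.bijective_iff_injective_and_card _).2 ⟨?_, ?_⟩
  · rintro ⟨p, e⟩ ⟨q, e'⟩ h
    obtain rfl : p = q := by
      simpa only [cycleRange_symm_mul_liftSucc_zero] using DFunLike.congr_fun h 0
    exact congrArg _ (Perm.viaEmbeddingHom_injective _ (mul_left_cancel h))
  · simp [Fintype.card_perm, Nat.factorial_succ]

lemma sum_perm_succ {M : Type*} [AddCommMonoid M] (F : Perm (Fin (k + 1)) → M) :
    ∑ σ, F σ = ∑ p : Fin (k + 1), ∑ e, F (p.cycleRange.symm * liftSucc k e) := by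
  rw [← (bijective_cycleRange_symm_mul_liftSucc k).sum_comp, Fintype.sum_prod_type]

lemma cycleRange_succ_symm (p : Fin k) :
    p.succ.cycleRange.symm = swap p.castSucc p.succ * p.castSucc.cycleRange.symm := by
  ext x
  induction x using Fin.cases with
  | zero => simp [swap_apply_left]
  | succ j =>
    simp only [Perm.mul_apply, Fin.cycleRange_symm_succ, swap_apply_def, Fin.succAbove]
    grind

lemma viaEmbedding_swap {α β : Type*} [DecidableEq α] [DecidableEq β] (i j : α) (f : α ↪ β) :
    Perm.viaEmbeddingHom f (swap i j) = swap (f i) (f j) := by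
  ext x
  rw [Perm.viaEmbeddingHom_apply]
  by_cases hx : x ∈ Set.range f
  · obtain ⟨a, rfl⟩ := hx
    rw [Perm.viaEmbedding_apply, f.injective.map_swap]
  · rw [Perm.viaEmbedding_apply_of_notMem _ _ _ hx, swap_apply_of_ne_of_ne] <;>
      rintro rfl <;> simp at hx

end CosetDecomposition

section BoxSum

variable {K : Type*} [Field K] {r m k : ℕ}

/-- The sum over the partitions in an `r × m` box of the products of `1 ∓ (aᵢ - bⱼ)⁻¹` over the
cells inside (sign `-`) and outside (sign `+`) the diagram. The rows are listed from the bottom up,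
so that a partition is a monotone function. -/
def boxSum (a : Fin r → K) (b : Fin m → K) : K :=
  ∑ ν : Fin r → Fin (m + 1) with Monotone ν,
    ∏ i, ∏ j : Fin m, (1 - (if (j : ℕ) < ν i then 1 else -1) * (a i - b j)⁻¹)

lemma boxSum_zero_left (a : Fin 0 → K) (b : Fin m → K) : boxSum a b = 1 := by
  simp [boxSum, Subsingleton.monotone]

lemma boxSum_zero_right (a : Fin r → K) (b : Fin 0 → K) : boxSum a b = 1 := by
  have hmono (ν : Fin r → Fin 1) : Monotone ν := fun _ _ _ => (Subsingleton.elim _ _).le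
  simp [boxSum, hmono]

lemma map_boxSum {L F : Type*} [Field L] [FunLike F K L]
    [RingHomClass F K L] (φ : F) (a : Fin r → K) (b : Fin m → K) :
    φ (boxSum a b) = boxSum (φ ∘ a) (φ ∘ b) := by
  simp [boxSum, apply_ite φ]

lemma sum_monotone_zero_first (F : (Fin (r + 1) → Fin (m + 1)) → K) :
    ∑ ν with Monotone ν ∧ ν 0 = 0, F ν = ∑ ν with Monotone ν, F (Fin.cons 0 ν) := by
  refine sum_nbij' Fin.tail (fun ν => Fin.cons 0 ν) ?_ ?_ ?_ ?_ ?_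
  · intro ν hν
    simp only [mem_filter_univ] at hν ⊢
    exact hν.1.comp (Fin.strictMono_succ).monotone
  · intro ν hν
    simp only [mem_filter_univ] at hν ⊢
    refine ⟨fun i j hij => ?_, Fin.cons_zero _ _⟩
    cases i using Fin.cases with
    | zero => simp
    | succ i =>
      cases j using Fin.cases with
      | zero => simp at hij
      | succ j => simpa using hν (Fin.succ_le_succ_iff.1 hij)
  · intro ν hν
    simp only [mem_filter_univ] at hν
    rw [← hν.2, Fin.cons_self_tail]
  · exact fun ν _ => Fin.tail_cons _ _
  · intro ν hν
    simp only [mem_filter_univ] at hν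
    rw [← hν.2, Fin.cons_self_tail]

lemma sum_monotone_pos_first (F : (Fin (r + 1) → Fin (m + 2)) → K) :
    ∑ ν with Monotone ν ∧ ν 0 ≠ 0, F ν =
      ∑ ν : Fin (r + 1) → Fin (m + 1) with Monotone ν, F (Fin.succ ∘ ν) := by
  symm
  refine sum_bij (fun ν _ => Fin.succ ∘ ν) ?_ ?_ ?_ fun _ _ => rfl
  · intro ν hν
    simp only [mem_filter_univ] at hν ⊢
    exact ⟨Fin.strictMono_succ.monotone.comp hν, Fin.succ_ne_zero _⟩
  · exact fun ν _ ν' _ h => (Fin.succ_injective _).comp_left h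
  · intro ν hν
    simp only [mem_filter_univ] at hν
    have hpos : ∀ i, ν i ≠ 0 := fun i h =>
      hν.2 (Fin.le_zero_iff.1 (h ▸ hν.1 (Fin.zero_le i)))
    refine ⟨fun i => (ν i).pred (hpos i), ?_, funext fun i => Fin.succ_pred _ _⟩
    exact (mem_filter_univ _).2 fun i j hij => Fin.pred_le_pred_iff.2 (hν.1 hij)

/-- Either the bottom row of the diagram is empty and may be removed, or every row meets the first
column, which may then be removed. -/
lemma boxSum_succ (a : Fin (r + 1) → K) (b : Fin (m + 1) → K) :
    boxSum a b = crossProd (a 0) b * boxSum (a ∘ Fin.succ) b +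
      crossProd (b 0) a * boxSum a (b ∘ Fin.succ) := by
  rw [boxSum, ← sum_filter_add_sum_filter_not _ (fun ν => ν 0 = 0), filter_filter, filter_filter,
    sum_monotone_zero_first, sum_monotone_pos_first]
  congr 1
  · rw [boxSum, mul_sum]
    refine sum_congr rfl fun ν _ => ?_
    simp [Fin.prod_univ_succ, crossProd]
  · rw [boxSum, mul_sum]
    refine sum_congr rfl fun ν _ => ?_
    rw [crossProd, ← prod_mul_distrib]
    refine prod_congr rfl fun i _ => ?_
    rw [Fin.prod_univ_succ, ← neg_sub (a i) (b 0), inv_neg]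
    simp [sub_eq_add_neg]

lemma boxSum_eq_sum_partitions (a : Fin r → K) (b : Fin m → K) :
    boxSum a b = ∑ mu : Fin r → Fin (m + 1) with ∀ i j, i ≤ j → (mu j : ℕ) ≤ (mu i : ℕ),
      ∏ i, ∏ j : Fin m, (1 - (if (j : ℕ) < (mu i : ℕ) then 1 else -1) * (a i.rev - b j)⁻¹) := by
  refine sum_nbij' (· ∘ Fin.rev) (· ∘ Fin.rev) ?_ ?_ ?_ ?_ fun ν _ => ?_
  · intro ν hν
    simp only [mem_filter_univ] at hν ⊢
    exact fun i j hij => hν (Fin.rev_le_rev.2 hij)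
  · intro mu hmu
    simp only [mem_filter_univ] at hmu ⊢
    exact fun i j hij => hmu _ _ (Fin.rev_le_rev.2 hij)
  · exact fun ν _ => by simp [Function.comp_assoc, Fin.rev_involutive.comp_self]
  · exact fun ν _ => by simp [Function.comp_assoc, Fin.rev_involutive.comp_self]
  · rw [← Equiv.prod_comp Fin.revPerm]
    simp

/-- The sum of the values of `boxSum` under all permutations of the two families of variables, with
weight `pairProd` for each family. -/
def symBoxSum (a : Fin r → K) (b : Fin m → K) : K :=
  ∑ σ : Perm (Fin r), ∑ τ : Perm (Fin m),
    boxSum (a ∘ σ) (b ∘ τ) * (pairProd (a ∘ σ) * pairProd (b ∘ τ))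

lemma sum_perm_succ_mul_pairProd (y : Fin (k + 1) → K) (G : K → (Fin k → K) → K) :
    ∑ σ : Perm (Fin (k + 1)), G (y (σ 0)) (y ∘ σ ∘ Fin.succ) * pairProd (y ∘ σ) =
      ∑ p, crossProd (y p) y * ∑ e : Perm (Fin k),
        G (y p) (y ∘ p.succAbove ∘ e) * pairProd (y ∘ p.succAbove ∘ e) := by
  have hsucc (p : Fin (k + 1)) (e : Perm (Fin k)) :
      ⇑(p.cycleRange.symm * liftSucc k e) ∘ Fin.succ = p.succAbove ∘ e :=
    funext (cycleRange_symm_mul_liftSucc_succ p e)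
  simp only [sum_perm_succ, pairProd_succ, Function.comp_assoc, hsucc, mul_sum,
    cycleRange_symm_mul_liftSucc_zero, Function.comp_apply]
  refine sum_congr rfl fun p _ => sum_congr rfl fun e _ => ?_
  rw [← Function.comp_assoc y, crossProd_comp_equiv, crossProd_comp_succAbove]
  ring

lemma sum_pairProd_comp_perm (y : Fin k → K) (hy : Function.Injective y) :
    ∑ σ : Perm (Fin k), pairProd (y ∘ σ) = (k.factorial : K) := by
  induction k with
  | zero => simp [pairProd]
  | succ k ih =>
    have hrec := sum_perm_succ_mul_pairProd y fun _ _ => 1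
    simp only [one_mul] at hrec
    rw [hrec]
    simp only [← Function.comp_assoc y, ih _ (hy.comp Fin.succAbove_right_injective)]
    rw [← sum_mul, sum_crossProd y hy, Fintype.card_fin, Nat.factorial_succ, Nat.cast_mul]

lemma symBoxSum_zero_left (a : Fin 0 → K) (b : Fin m → K) (hb : Function.Injective b) :
    symBoxSum a b = (m.factorial : K) := by
  simp [symBoxSum, boxSum_zero_left, pairProd, ← sum_pairProd_comp_perm b hb]

lemma symBoxSum_zero_right (a : Fin r → K) (b : Fin 0 → K) (ha : Function.Injective a) :
    symBoxSum a b = (r.factorial : K) := by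
  simp [symBoxSum, boxSum_zero_right, pairProd, ← sum_pairProd_comp_perm a ha]

lemma symBoxSum_succ (a : Fin (r + 1) → K) (b : Fin (m + 1) → K) :
    symBoxSum a b =
      ∑ p, crossProd (a p) (Sum.elim a b) * symBoxSum (a ∘ p.succAbove) b +
      ∑ q, crossProd (b q) (Sum.elim a b) * symBoxSum a (b ∘ q.succAbove) := by
  have hσ := sum_perm_succ_mul_pairProd a fun t u =>
    ∑ τ : Perm (Fin (m + 1)), crossProd t b * boxSum u (b ∘ τ) * pairProd (b ∘ τ)
  have hτ := sum_perm_succ_mul_pairProd b fun t u =>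
    ∑ σ : Perm (Fin (r + 1)), crossProd t a * boxSum (a ∘ σ) u * pairProd (a ∘ σ)
  simp only [symBoxSum, boxSum_succ, crossProd_comp_equiv, crossProd_sumElim, add_mul,
    sum_add_distrib, mul_sum, sum_mul, Function.comp_assoc, Function.comp_apply] at hσ hτ ⊢
  congr 1
  · refine Eq.trans ?_ (hσ.trans ?_)
    · exact sum_congr rfl fun σ _ => sum_congr rfl fun τ _ => by ring
    · exact sum_congr rfl fun p _ => sum_congr rfl fun σ _ => sum_congr rfl fun τ _ => by ring
  · rw [sum_comm]
    refine Eq.trans ?_ (hτ.trans ?_)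
    · exact sum_congr rfl fun τ _ => sum_congr rfl fun σ _ => by ring
    · refine sum_congr rfl fun q _ => ?_
      rw [sum_comm]
      exact sum_congr rfl fun σ _ => sum_congr rfl fun τ _ => by ring

theorem symBoxSum_eq_factorial (a : Fin r → K) (b : Fin m → K)
    (hab : Function.Injective (Sum.elim a b)) :
    symBoxSum a b = ((r + m).factorial : K) := by
  induction r generalizing m with
  | zero => rw [symBoxSum_zero_left a b (hab.comp Sum.inr_injective), Nat.zero_add]
  | succ r ihr =>
    induction m with
    | zero => rw [symBoxSum_zero_right a b (hab.comp Sum.inl_injective), Nat.add_zero]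
    | succ m ihm =>
      have hinl (p : Fin (r + 1)) :
          symBoxSum (a ∘ p.succAbove) b = ((r + m + 1).factorial : K) :=
        ihr _ _ (by
          simpa only [Sum.elim_comp_map, Function.comp_id] using
            hab.comp (Fin.succAbove_right_injective.sumMap Function.injective_id))
      have hinr (q : Fin (m + 1)) :
          symBoxSum a (b ∘ q.succAbove) = ((r + m + 1).factorial : K) := by
        rw [ihm, add_right_comm]
        simpa only [Sum.elim_comp_map, Function.comp_id] using
          hab.comp (Function.injective_id.sumMap Fin.succAbove_right_injective)
      have hsum := sum_crossProd (Sum.elim a b) hab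
      rw [Fintype.sum_sum_type] at hsum
      simp only [symBoxSum_succ, hinl, hinr, ← sum_mul, ← add_mul, Sum.elim_inl, Sum.elim_inr]
        at hsum ⊢
      rw [hsum, show r + 1 + (m + 1) = r + m + 1 + 1 by omega, Nat.factorial_succ (r + m + 1)]
      push_cast [Fintype.card_sum, Fintype.card_fin]
      ring

end BoxSum

section Symmetrizer

variable {𝕜 K : Type*} [Field 𝕜] [Field K] [Algebra 𝕜 K] {k n : ℕ}

lemma demazureMinusAux_apply (s : K ≃ₐ[𝕜] K) (c f : K) :
    demazureMinusAux 𝕜 K s c f = (1 + c⁻¹) * s f - c⁻¹ * f := by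
  simp only [demazureMinusAux, LinearMap.sub_apply, LinearMap.comp_apply, LinearMap.id_apply,
    LinearMap.mulRight_apply, AlgEquiv.toLinearMap_apply]
  ring

/-- The homomorphism `ρ` sends every simple transposition to the operator `Dᵢ⁻` formed with the
action `α`, by which `S_k` permutes the elements `y` of `K`. -/
structure IsDMinusRep (y : Fin k → K) (α : Perm (Fin k) →* (K ≃ₐ[𝕜] K))
    (ρ : Perm (Fin k) →* Module.End 𝕜 K) : Prop where
  apply_var : ∀ σ i, α σ (y i) = y (σ i)
  apply_swap : ∀ i j : Fin k, (j : ℕ) = i + 1 →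
    ρ (swap i j) = demazureMinusAux 𝕜 K (α (swap i j)) (y j - y i)

namespace IsDMinusRep

lemma comp_viaEmbeddingHom {y : Fin n → K} {α : Perm (Fin n) →* (K ≃ₐ[𝕜] K)}
    {ρ : Perm (Fin n) →* Module.End 𝕜 K} (h : IsDMinusRep y α ρ) (f : Fin k ↪ Fin n)
    (hf : ∀ i j : Fin k, (j : ℕ) = i + 1 → (f j : ℕ) = f i + 1) :
    IsDMinusRep (y ∘ f) (α.comp (Perm.viaEmbeddingHom f)) (ρ.comp (Perm.viaEmbeddingHom f)) where
  apply_var σ i := by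
    simp only [MonoidHom.comp_apply, Function.comp_apply, h.apply_var, Perm.viaEmbeddingHom_apply,
      Perm.viaEmbedding_apply]
  apply_swap i j hij := by
    simp only [MonoidHom.comp_apply, Function.comp_apply, viaEmbedding_swap,
      h.apply_swap _ _ (hf i j hij)]

variable {y : Fin k → K} {α : Perm (Fin k) →* (K ≃ₐ[𝕜] K)} {ρ : Perm (Fin k) →* Module.End 𝕜 K}

lemma apply_comp (h : IsDMinusRep y α ρ) (σ : Perm (Fin k)) : α σ ∘ y = y ∘ σ :=
  funext (h.apply_var σ)

lemma apply_crossProd (h : IsDMinusRep y α ρ) (σ : Perm (Fin k)) (i : Fin k) :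
    α σ (crossProd (y i) y) = crossProd (y (σ i)) y := by
  rw [map_crossProd, h.apply_var, h.apply_comp, crossProd_comp_equiv]

end IsDMinusRep

variable {y : Fin (k + 1) → K} {α : Perm (Fin (k + 1)) →* (K ≃ₐ[𝕜] K)}
  {ρ : Perm (Fin (k + 1)) →* Module.End 𝕜 K} {g : K}

lemma apply_eq_apply_cycleRange_symm (hg : ∀ e, α (liftSucc k e) g = g)
    (σ : Perm (Fin (k + 1))) : α σ g = α (σ 0).cycleRange.symm g := by
  obtain ⟨⟨p, e⟩, rfl⟩ := (bijective_cycleRange_symm_mul_liftSucc k).surjective σ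
  simp only [cycleRange_symm_mul_liftSucc_zero]
  rw [map_mul, AlgEquiv.mul_apply, hg]

lemma apply_apply_cycleRange_symm (hg : ∀ e, α (liftSucc k e) g = g) (σ : Perm (Fin (k + 1)))
    (q : Fin (k + 1)) : α σ (α q.cycleRange.symm g) = α (σ q).cycleRange.symm g := by
  rw [← AlgEquiv.mul_apply, ← map_mul, apply_eq_apply_cycleRange_symm hg, Perm.mul_apply,
    Fin.cycleRange_symm_zero]

lemma one_add_inv_mul_inv_sub_inv_mul_inv {u v w : K} (huv : u ≠ v) (huw : u ≠ w) (hvw : v ≠ w) :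
    (1 + (w - v)⁻¹) * (u - w)⁻¹ - (w - v)⁻¹ * (u - v)⁻¹ = (1 + (u - v)⁻¹) * (u - w)⁻¹ := by
  have := sub_ne_zero.2 huv
  have := sub_ne_zero.2 huw
  have := sub_ne_zero.2 hvw.symm
  field_simp
  ring

lemma Iio_succ_eq_insert_castSucc (p : Fin k) :
    Iio p.succ = insert p.castSucc (Iio p.castSucc) := by
  rw [Iio_insert]
  ext q
  simp only [mem_Iio, mem_Iic, Fin.lt_def, Fin.le_def, Fin.val_succ, Fin.val_castSucc,
    Nat.lt_succ_iff]

/-- The coefficients come from pushing `g` up one simple transposition at a time, as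
`p.cycleRange.symm` is the product `s_{p-1} ⋯ s₁ s₀`. -/
lemma IsDMinusRep.apply_cycleRange_symm (h : IsDMinusRep y α ρ) (hy : Function.Injective y)
    (hg : ∀ e, α (liftSucc k e) g = g) (p : Fin (k + 1)) :
    ρ p.cycleRange.symm g = (∏ j ∈ Iio p, (1 + (y p - y j)⁻¹)) * α p.cycleRange.symm g +
      ∑ q ∈ Iio p, (∏ j ∈ Iio p, (1 + (y q - y j)⁻¹)) * (y q - y p)⁻¹ *
        α q.cycleRange.symm g := by
  induction p using Fin.induction with
  | zero =>
    rw [show (0 : Fin (k + 1)).cycleRange.symm = 1 by simp [Perm.one_def], map_one, map_one,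
      show Iio (0 : Fin (k + 1)) = ∅ from Iio_bot]
    simp
  | succ p ih =>
    set s := swap p.castSucc p.succ
    set c := y p.succ - y p.castSucc with hc
    have hρ : ρ p.succ.cycleRange.symm g = (1 + c⁻¹) * α s (ρ p.castSucc.cycleRange.symm g) -
        c⁻¹ * ρ p.castSucc.cycleRange.symm g := by
      rw [cycleRange_succ_symm, map_mul, Module.End.mul_apply, h.apply_swap _ _ (by simp),
        demazureMinusAux_apply]
    have hsp : s p.castSucc = p.succ := swap_apply_left _ _
    have hsq {q} (hq : q ∈ Iio p.castSucc) : s q = q :=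
      swap_apply_of_ne_of_ne (mem_Iio.1 hq).ne ((mem_Iio.1 hq).trans p.castSucc_lt_succ).ne
    have hprod (q : Fin (k + 1)) : α s (∏ j ∈ Iio p.castSucc, (1 + (y q - y j)⁻¹)) =
        ∏ j ∈ Iio p.castSucc, (1 + (y (s q) - y j)⁻¹) := by
      rw [map_prod]
      exact prod_congr rfl fun j hj => by simp [h.apply_var, hsq hj]
    have hcoeff {q} (hq : q ∈ Iio p.castSucc) :
        (1 + c⁻¹) * (y q - y p.succ)⁻¹ - c⁻¹ * (y q - y p.castSucc)⁻¹ =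
          (1 + (y q - y p.castSucc)⁻¹) * (y q - y p.succ)⁻¹ :=
      one_add_inv_mul_inv_sub_inv_mul_inv (hy.ne (mem_Iio.1 hq).ne)
        (hy.ne ((mem_Iio.1 hq).trans p.castSucc_lt_succ).ne) (hy.ne p.castSucc_lt_succ.ne)
    have hnot : p.castSucc ∉ Iio p.castSucc := by simp
    rw [hρ, ih, Iio_succ_eq_insert_castSucc, sum_insert hnot, ← neg_sub (y p.succ), inv_neg, ← hc]
    simp only [prod_insert hnot, map_add, map_mul, map_sum, hprod, h.apply_var, map_inv₀, map_sub,
      apply_apply_cycleRange_symm hg, hsp, sub_self, inv_zero, add_zero, one_mul, ← hc]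
    rw [mul_add, mul_add, mul_sum, mul_sum, add_sub_add_comm, ← sum_sub_distrib, ← add_assoc]
    congr 1
    · ring
    · exact sum_congr rfl fun q hq => by
        rw [hsq hq, mul_right_comm (_ + _), ← hcoeff hq]
        ring

/-- Telescoping in the order of the factors, started after the vanishing `f q`. -/
lemma prod_one_add_eq_of_eq_zero {ι R : Type*} [Fintype ι] [LinearOrder ι]
    [LocallyFiniteOrderBot ι] [LocallyFiniteOrderTop ι] [CommSemiring R] (f : ι → R) {q : ι}
    (hq : f q = 0) :
    ∏ j, (1 + f j) = ∏ j ∈ Iio q, (1 + f j) + ∑ p ∈ Ioi q, f p * ∏ j ∈ Iio p, (1 + f j) := by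
  have hterm (p : ι) (hp : p ∈ Iio q) : {j ∈ Iio q | j < p} = Iio p := by
    ext j
    simpa using fun hj : j < p => hj.trans (mem_Iio.1 hp)
  have huniv (p : ι) : ({j | j < p} : Finset ι) = Iio p := by ext; simp
  have hIic : ({p | p ≤ q} : Finset ι) = insert q (Iio q) := by
    ext; simp [le_iff_eq_or_lt]
  have hIoi : ({p | ¬p ≤ q} : Finset ι) = Ioi q := by ext; simp
  rw [prod_one_add_ordered univ, prod_one_add_ordered (Iio q),
    ← sum_filter_add_sum_filter_not univ (· ≤ q), hIic, hIoi, sum_insert (by simp), hq, zero_mul,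
    zero_add, add_assoc]
  simp only [huniv]
  congr 2
  exact sum_congr rfl fun p hp => by rw [hterm p hp]

/-- In the sum over `p`, the coefficients of `α q.cycleRange.symm g` telescope. -/
lemma IsDMinusRep.sum_apply_cycleRange_symm (h : IsDMinusRep y α ρ) (hy : Function.Injective y)
    (hg : ∀ e, α (liftSucc k e) g = g) :
    ∑ p : Fin (k + 1), ρ p.cycleRange.symm g =
      ∑ p, crossProd (y p) y * α p.cycleRange.symm g := by
  have hcross (q : Fin (k + 1)) :
      crossProd (y q) y = ∏ j ∈ Iio q, (1 + (y q - y j)⁻¹) +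
        ∑ p ∈ Ioi q, (∏ j ∈ Iio p, (1 + (y q - y j)⁻¹)) * (y q - y p)⁻¹ := by
    rw [crossProd, prod_one_add_eq_of_eq_zero _ (by rw [sub_self, inv_zero])]
    simp only [mul_comm]
  simp only [h.apply_cycleRange_symm hy hg, hcross, add_mul, sum_add_distrib, sum_mul]
  congr 1
  exact sum_comm' (by simp)

theorem IsDMinusRep.sum_apply {k : ℕ} {y : Fin k → K} {α : Perm (Fin k) →* (K ≃ₐ[𝕜] K)}
    {ρ : Perm (Fin k) →* Module.End 𝕜 K} (h : IsDMinusRep y α ρ) (hy : Function.Injective y)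
    (f : K) : ∑ σ, ρ σ f = ∑ σ, α σ (f * pairProd y) := by
  induction k with
  | zero => simp [pairProd, Subsingleton.elim default (1 : Perm (Fin 0))]
  | succ k ih =>
    have hlift := h.comp_viaEmbeddingHom (Fin.succEmb k) (by simp)
    set g := ∑ e, α (liftSucc k e) (f * pairProd (y ∘ Fin.succ)) with hgdef
    have hρg : ∑ e, ρ (liftSucc k e) f = g := ih hlift (hy.comp (Fin.succ_injective k))
    have hg (e : Perm (Fin k)) : α (liftSucc k e) g = g := by
      simp only [hgdef, map_sum, ← AlgEquiv.mul_apply, ← map_mul]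
      exact Equiv.sum_comp (Equiv.mulLeft e) fun e' => α (liftSucc k e') _
    have hcross (p : Fin (k + 1)) (e : Perm (Fin k)) :
        α (p.cycleRange.symm * liftSucc k e) (crossProd (y 0) (y ∘ Fin.succ)) =
          crossProd (y p) y := by
      rw [← Fin.succAbove_zero, crossProd_comp_succAbove, h.apply_crossProd,
        cycleRange_symm_mul_liftSucc_zero]
    calc ∑ σ, ρ σ f = ∑ p : Fin (k + 1), ρ p.cycleRange.symm g := by
          simp only [sum_perm_succ, map_mul, Module.End.mul_apply, ← map_sum, hρg]
      _ = ∑ p, crossProd (y p) y * α p.cycleRange.symm g := h.sum_apply_cycleRange_symm hy hg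
      _ = ∑ σ, α σ (f * pairProd y) := by
          simp only [sum_perm_succ, pairProd_succ, mul_left_comm f, map_mul (α _) (crossProd _ _),
            hcross, hgdef, map_sum, mul_sum, ← AlgEquiv.mul_apply, ← map_mul α]

theorem IsDMinusRep.sum_sum_apply {r m : ℕ} {y : Fin n → K} {α : Perm (Fin n) →* (K ≃ₐ[𝕜] K)}
    {ρ : Perm (Fin n) →* Module.End 𝕜 K} (h : IsDMinusRep y α ρ) (hy : Function.Injective y)
    (u : Fin r ↪ Fin n) (v : Fin m ↪ Fin n)
    (hu : ∀ i j : Fin r, (j : ℕ) = i + 1 → (u j : ℕ) = u i + 1)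
    (hv : ∀ i j : Fin m, (j : ℕ) = i + 1 → (v j : ℕ) = v i + 1)
    (huv : ∀ i j, u i ≠ v j) (f : K) :
    ∑ σ, ∑ τ, ρ (Perm.viaEmbeddingHom u σ * Perm.viaEmbeddingHom v τ) f =
      ∑ σ, ∑ τ, α (Perm.viaEmbeddingHom u σ * Perm.viaEmbeddingHom v τ)
        (f * (pairProd (y ∘ u) * pairProd (y ∘ v))) := by
  have hfix (τ : Perm (Fin m)) :
      α (Perm.viaEmbeddingHom v τ) (pairProd (y ∘ u)) = pairProd (y ∘ u) := by
    rw [map_pairProd]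
    refine congrArg pairProd (funext fun i => ?_)
    refine (h.apply_var _ _).trans (congrArg y (Perm.viaEmbedding_apply_of_notMem _ _ _ ?_))
    exact fun ⟨j, hj⟩ => huv i j hj.symm
  have hsumu := (h.comp_viaEmbeddingHom u hu).sum_apply (hy.comp u.injective)
  have hsumv := (h.comp_viaEmbeddingHom v hv).sum_apply (hy.comp v.injective)
  simp only [MonoidHom.comp_apply] at hsumu hsumv
  simp only [map_mul ρ, map_mul α, Module.End.mul_apply, AlgEquiv.mul_apply, ← map_sum, hsumv,
    hsumu]
  refine sum_congr rfl fun σ _ => congrArg _ ?_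
  rw [sum_mul]
  refine sum_congr rfl fun τ _ => ?_
  rw [mul_left_comm f, map_mul _ (pairProd (y ∘ u)), hfix, mul_comm]

theorem IsDMinusRep.sum_sum_apply_boxSum {r m : ℕ} {y : Fin n → K}
    {α : Perm (Fin n) →* (K ≃ₐ[𝕜] K)} {ρ : Perm (Fin n) →* Module.End 𝕜 K}
    (h : IsDMinusRep y α ρ) (hy : Function.Injective y) (u : Fin r ↪ Fin n) (v : Fin m ↪ Fin n)
    (hu : ∀ i j : Fin r, (j : ℕ) = i + 1 → (u j : ℕ) = u i + 1)
    (hv : ∀ i j : Fin m, (j : ℕ) = i + 1 → (v j : ℕ) = v i + 1) (huv : ∀ i j, u i ≠ v j) :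
    ∑ σ, ∑ τ, ρ (Perm.viaEmbeddingHom u σ * Perm.viaEmbeddingHom v τ)
      (boxSum (y ∘ u) (y ∘ v)) = ((r + m).factorial : K) := by
  have hinj : Function.Injective (Sum.elim (y ∘ u) (y ∘ v)) :=
    (hy.comp u.injective).sumElim (hy.comp v.injective) fun i j => hy.ne (huv i j)
  rw [h.sum_sum_apply hy u v hu hv huv, ← symBoxSum_eq_factorial _ _ hinj, symBoxSum]
  refine sum_congr rfl fun σ _ => sum_congr rfl fun τ _ => ?_
  set π := Perm.viaEmbeddingHom u σ * Perm.viaEmbeddingHom v τ with hπ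
  have hπu : α π ∘ y ∘ u = (y ∘ u) ∘ σ := funext fun i => by
    have hv' : u i ∉ Set.range v := fun ⟨j, hj⟩ => huv i j hj.symm
    simp only [Function.comp_apply, h.apply_var, hπ, Perm.mul_apply, Perm.viaEmbeddingHom_apply,
      Perm.viaEmbedding_apply_of_notMem _ v _ hv', Perm.viaEmbedding_apply]
  have hπv : α π ∘ y ∘ v = (y ∘ v) ∘ τ := funext fun j => by
    have hu' : v (τ j) ∉ Set.range u := fun ⟨i, hi⟩ => huv i (τ j) hi
    simp only [Function.comp_apply, h.apply_var, hπ, Perm.mul_apply, Perm.viaEmbeddingHom_apply,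
      Perm.viaEmbedding_apply_of_notMem _ u _ hu', Perm.viaEmbedding_apply]
  rw [← hπu, ← hπv, map_mul (α π), map_mul (α π), map_boxSum, map_pairProd, map_pairProd]

end Symmetrizer

section YoungSubgroup

variable {α β γ : Type*}

lemma permCongr_sumCongr (e : α ⊕ β ≃ γ) (σ : Perm α) (τ : Perm β) :
    e.permCongr (Perm.sumCongr σ τ) =
      Perm.viaEmbeddingHom (Function.Embedding.inl.trans e.toEmbedding) σ *
        Perm.viaEmbeddingHom (Function.Embedding.inr.trans e.toEmbedding) τ := by
  ext x
  obtain ⟨z, rfl⟩ := e.surjective x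
  rw [Perm.mul_apply, permCongr_apply, symm_apply_apply, Perm.viaEmbeddingHom_apply,
    Perm.viaEmbeddingHom_apply]
  rcases z with a | b
  · rw [Perm.viaEmbedding_apply_of_notMem τ _ _ (by simp)]
    exact (Perm.viaEmbedding_apply σ (Function.Embedding.inl.trans e.toEmbedding) a).symm
  · have hτ := Perm.viaEmbedding_apply τ (Function.Embedding.inr.trans e.toEmbedding) b
    simp only [Function.Embedding.trans_apply, Function.Embedding.inr_apply, coe_toEmbedding] at hτ
    rw [hτ, Perm.viaEmbedding_apply_of_notMem σ _ _ (by simp)]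
    rfl

lemma sum_perm_preserving [Fintype α] [Fintype β] [Fintype γ] [DecidableEq α] [DecidableEq β]
    [DecidableEq γ] {M : Type*} [AddCommMonoid M] (e : α ⊕ β ≃ γ) (P : γ → Prop)
    [DecidablePred fun σ : Perm γ => ∀ x, P x ↔ P (σ x)]
    (hP : ∀ z, P (e z) ↔ z ∈ Set.range Sum.inl) (F : Perm γ → M) :
    ∑ σ : Perm γ with ∀ x, P x ↔ P (σ x), F σ =
      ∑ σ : Perm α, ∑ τ : Perm β,
        F (Perm.viaEmbeddingHom (Function.Embedding.inl.trans e.toEmbedding) σ *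
          Perm.viaEmbeddingHom (Function.Embedding.inr.trans e.toEmbedding) τ) := by
  simp only [← permCongr_sumCongr]
  rw [← Fintype.sum_prod_type']
  symm
  refine sum_bij (fun g _ => e.permCongr (Perm.sumCongr g.1 g.2)) ?_ ?_ ?_ fun _ _ => rfl
  · intro g _
    refine (mem_filter_univ _).2 fun x => ?_
    obtain ⟨z, rfl⟩ := e.surjective x
    rw [permCongr_apply, symm_apply_apply, hP, hP]
    rcases z with z | z <;> simp
  · exact fun g _ g' _ h => Perm.sumCongrHom_injective (e.permCongr.injective h)
  · intro σ hσ
    have hσ' := (mem_filter_univ _).1 hσ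
    have hmaps : Set.MapsTo (e.symm.permCongr σ) (Set.range Sum.inl) (Set.range Sum.inl) := by
      intro z hz
      rw [← hP] at hz ⊢
      simpa [permCongr_apply] using (hσ' _).1 hz
    obtain ⟨g, hg⟩ := Perm.mem_sumCongrHom_range_of_perm_mapsTo_inl hmaps
    exact ⟨g, mem_univ _, (congrArg e.permCongr hg).trans (e.permCongr.apply_symm_apply σ)⟩

end YoungSubgroup

theorem sum_DMinus_action_eq_factorial_general {𝕜 K : Type*} [Field 𝕜] [Field K] [Algebra 𝕜 K]
    {r n : ℕ} (hr : r ≤ n) (x : Fin n → K) (hx : Function.Injective x)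
    (α : Perm (Fin n) →* (K ≃ₐ[𝕜] K)) (hα : ∀ σ i, α σ (x i) = x (σ i))
    (Ψ : Perm (Fin n) →* Module.End 𝕜 K)
    (hΨ : ∀ (i : ℕ) (hi : i + 1 < n),
      Ψ (swap ⟨i, Nat.lt_of_succ_lt hi⟩ ⟨i + 1, hi⟩) =
        demazureMinusAux 𝕜 K (α (swap ⟨i, Nat.lt_of_succ_lt hi⟩ ⟨i + 1, hi⟩))
          (x ⟨i + 1, hi⟩ - x ⟨i, Nat.lt_of_succ_lt hi⟩)) :
    ∑ π ∈ univ.filter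
        (fun σ : Perm (Fin n) => ∀ i : Fin n, ((i : ℕ) < r ↔ ((σ i : ℕ) < r))),
      Ψ π (∑ mu ∈ univ.filter
          (fun mu : Fin r → Fin (n - r + 1) =>
            ∀ a b : Fin r, a ≤ b → (mu b : ℕ) ≤ (mu a : ℕ)),
        ∏ i : Fin r, ∏ j : Fin (n - r),
          (1 - (if (j : ℕ) < (mu i : ℕ) then (1 : K) else -1) *
            (x ⟨r - 1 - (i : ℕ), by have := i.isLt; omega⟩ -
              x ⟨r + (j : ℕ), by have := j.isLt; omega⟩)⁻¹)) =
      (n.factorial : K) := by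
  let e : Fin r ⊕ Fin (n - r) ≃ Fin n :=
    finSumFinEquiv.trans (finCongr (Nat.add_sub_cancel' hr))
  have hlt (z) : (e z : ℕ) < r ↔ z ∈ Set.range Sum.inl := by
    rcases z with i | j <;> simp [e]
  have hrep : IsDMinusRep x α Ψ :=
    ⟨hα, fun ⟨i, _⟩ ⟨j, hj⟩ hij => by obtain rfl : j = i + 1 := hij; exact hΨ i hj⟩
  let u : Fin r ↪ Fin n := Function.Embedding.inl.trans e.toEmbedding
  let v : Fin (n - r) ↪ Fin n := Function.Embedding.inr.trans e.toEmbedding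
  have hmain := hrep.sum_sum_apply_boxSum hx u v (by simp [u, e]) (by simp [v, e, add_assoc])
    (by simp [u, v])
  rw [Nat.add_sub_cancel' hr] at hmain
  rw [sum_perm_preserving e (fun i : Fin n => (i : ℕ) < r) hlt, ← hmain]
  refine sum_congr rfl fun σ _ => sum_congr rfl fun τ _ => congrArg _ ?_
  rw [boxSum_eq_sum_partitions]
  refine sum_congr rfl fun mu _ => prod_congr rfl fun i _ => prod_congr rfl fun j _ => ?_
  have hui : u i.rev = ⟨r - 1 - i, by omega⟩ := Fin.ext (by simp [u, e]; omega)
  have hvj : v j = ⟨r + j, by omega⟩ := Fin.ext (by simp [v, e])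
  rw [Function.comp_apply, Function.comp_apply, hui, hvj]

section VariableAction

variable {𝕜 K : Type*} [Field 𝕜] [Field K] {n : ℕ} [Algebra (MvPolynomial (Fin n) 𝕜) K]
  [IsFractionRing (MvPolynomial (Fin n) 𝕜) K]

lemma ratVar_injective : Function.Injective (ratVar 𝕜 n K) :=
  (IsFractionRing.injective (MvPolynomial (Fin n) 𝕜) K).comp (X_injective (R := 𝕜))

variable [Algebra 𝕜 K] [IsScalarTower 𝕜 (MvPolynomial (Fin n) 𝕜) K]

lemma algEquiv_ext_ratVar {φ ψ : K ≃ₐ[𝕜] K}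
    (h : ∀ i, φ (ratVar 𝕜 n K i) = ψ (ratVar 𝕜 n K i)) : φ = ψ := by
  have hpoly : (φ : K →ₐ[𝕜] K).comp (IsScalarTower.toAlgHom 𝕜 (MvPolynomial (Fin n) 𝕜) K) =
      (ψ : K →ₐ[𝕜] K).comp (IsScalarTower.toAlgHom 𝕜 (MvPolynomial (Fin n) 𝕜) K) :=
    MvPolynomial.algHom_ext h
  have hring : (φ : K →+* K) = (ψ : K →+* K) :=
    IsLocalization.ringHom_ext (nonZeroDivisors (MvPolynomial (Fin n) 𝕜))
      (RingHom.ext fun p => DFunLike.congr_fun hpoly p)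
  exact AlgEquiv.ext fun x => DFunLike.congr_fun hring x

/-- The automorphisms that permute the variables, as a group homomorphism. -/
def permAction (s : Perm (Fin n) → (K ≃ₐ[𝕜] K))
    (hs : ∀ σ i, s σ (ratVar 𝕜 n K i) = ratVar 𝕜 n K (σ i)) : Perm (Fin n) →* (K ≃ₐ[𝕜] K) :=
  MonoidHom.mk' s fun σ τ => algEquiv_ext_ratVar (n := n) fun i => by simp [hs]

end VariableAction

end SymmetrizedBoxSum

/-- Fix `0 ≤ r ≤ n` and let `Ψ : Sₙ → End_𝕜(K)` be any monoid
homomorphism sending each simple transposition to the corresponding operator `Dᵢ⁻`.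
Summing, over all `π` in the Young subgroup `S_r × S_{n−r}` of `Sₙ` (those permutations
preserving both blocks of indices), the value of `Ψ π` on
`∑_{μ ∈ P_{r,n}} ∏_{i=1}^{r} ∏_{j=1}^{n−r} (1 − ε_{i,j}(μ)·y_{i,j})` gives `n!`.
Here (in the `1`-indexed notation of the paper) `μ` runs over partitions fitting in an
`r × (n−r)` box, `ε_{i,j}(μ) = 1` if `j ≤ μᵢ` and `−1` otherwise, and
`y_{i,j} = (x_{r+1−i} − x_{r+j})⁻¹`; below everything is `0`-indexed. -/
theorem sum_DMinus_action_eq_factorial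
    (𝕜 : Type*) [Field 𝕜] [CharZero 𝕜] (n r : ℕ) (hn : 1 ≤ n) (hr : r ≤ n)
    (K : Type*) [Field K] [Algebra 𝕜 K] [Algebra (MvPolynomial (Fin n) 𝕜) K]
    [IsScalarTower 𝕜 (MvPolynomial (Fin n) 𝕜) K]
    [IsFractionRing (MvPolynomial (Fin n) 𝕜) K]
    (s : Equiv.Perm (Fin n) → (K ≃ₐ[𝕜] K))
    (hs : ∀ (σ : Equiv.Perm (Fin n)) (i : Fin n), s σ (ratVar 𝕜 n K i) = ratVar 𝕜 n K (σ i))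
    (Ψ : Equiv.Perm (Fin n) →* Module.End 𝕜 K)
    (hΨ : ∀ (i : ℕ) (hi : i + 1 < n),
      Ψ (Equiv.swap ⟨i, Nat.lt_of_succ_lt hi⟩ ⟨i + 1, hi⟩) = DMinus 𝕜 K s i hi) :
    ∑ π ∈ Finset.univ.filter
        (fun σ : Equiv.Perm (Fin n) => ∀ x : Fin n, ((x : ℕ) < r ↔ ((σ x : ℕ) < r))),
      Ψ π (∑ mu ∈ Finset.univ.filter
          (fun mu : Fin r → Fin (n - r + 1) =>
            ∀ a b : Fin r, a ≤ b → (mu b : ℕ) ≤ (mu a : ℕ)),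
        ∏ i : Fin r, ∏ j : Fin (n - r),
          (1 - (if (j : ℕ) < (mu i : ℕ) then (1 : K) else -1) *
            (ratVar 𝕜 n K ⟨r - 1 - (i : ℕ), by have := i.isLt; omega⟩ -
              ratVar 𝕜 n K ⟨r + (j : ℕ), by have := j.isLt; omega⟩)⁻¹)) =
      (n.factorial : K) := by
  exact sum_DMinus_action_eq_factorial_general hr (ratVar 𝕜 n K) ratVar_injective
    (permAction s hs) hs Ψ hΨ
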